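/- arXiv:1907.00589 — 2 statements merged into one kernel-verified Lean document; each statement's English description precedes it below -/
import Mathlib

section
/- Let a = {a_j}_{j≥1} and b = {b_j}_{j≥1} be sequences of positive real numbers with a_1 ≤ a_2 ≤ ⋯ and inf_{j≥1} b_j > 0, and for d ∈ ℕ, ε ∈ (0,1) let n(ε, I_d) = #{k ∈ ℤ^d : Σ_{j=1}^d a_j |k_j|^{2b_j} < ε^{-2} - 1}. Then weak tractability holds (i.e., lim_{ε^{-1}+d→∞} (ln n(ε, I_d))/(ε^{-1} + d) = 0) if and only if lim_{j→∞} a_j/j = ∞. -/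
/-!
Write `x = ε⁻¹` and `S(d, s) = {k ∈ ℤ^d : ∑ a_j |k_j|^{2b_j} < s}`, so that `n(ε, I_d)` is the
cardinality of `S(d, x² - 1)`.

*Necessity.* If `a_j / j` does not tend to infinity, then `a_d ≤ C d` for infinitely many `d`. For
such `d` take `x = C d + 1`: since `x² - 1 > C d²`, all of `{0,1}^d` lies in `S(d, x² - 1)`, so
`ln n ≥ d ln 2`, which is of the order of `x + d` (`two_pow_le_ncard`).

*Sufficiency.* An exponential-moment bound (`ncard_le_exp_mul_prod`) gives, for every `t > 0`,
`n ≤ e^{ts} ∏_j (1 + (Q / (t a_j))²)^m`, where `Q` and `m` depend only on `inf b_j`; here each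
one-dimensional sum `∑_k e^{-u|k|^{2b}}` is estimated through `e^{-y} ≤ p! y^{-p}` with `p` so
large that the sum over `k` converges. Take `t = θ / x`, so `ts ≤ θ x`. If `a_j ≥ K (j + 1)` for
`j ≥ J`, the factors with `j ≥ J` are controlled by Euler's product for the sine:
`∏_j (1 + y²/(j+1)²) ≤ e^{π(y+1)}` with `y = Q x / (θ K)` (`prod_one_add_sq_le_exp`), and the `J`
remaining factors contribute only `O(log x)`. Choosing `θ` small and then `K` large gives
`ln n ≤ η x + O(1)` with any prescribed `η`, uniformly in `d` (`log_ncard_le`).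
-/

open Filter

lemma prod_one_add_sq_mono (y : ℝ) :
    Monotone fun n : ℕ => ∏ j ∈ Finset.range n, (1 + (y / ((j : ℝ) + 1)) ^ 2) := by
  refine monotone_nat_of_le_succ fun n => ?_
  rw [Finset.prod_range_succ]
  exact le_mul_of_one_le_right (Finset.prod_nonneg fun i _ => by positivity)
    (by nlinarith [sq_nonneg (y / ((n : ℝ) + 1))])

/-- Euler's sine product at `i y`: the partial products of `sinh (π y) / (π y)` are at most
`e^{π y}`. The restriction `1 ≤ y` makes the denominator `π y` harmless. -/
lemma prod_one_add_sq_le_exp_of_one_le {y : ℝ} (hy : 1 ≤ y) (n : ℕ) :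
    ∏ j ∈ Finset.range n, (1 + (y / ((j : ℝ) + 1)) ^ 2) ≤ Real.exp (Real.pi * y) := by
  have h := (Complex.tendsto_euler_sin_prod (y * Complex.I)).norm
  have hpi := Real.pi_gt_three
  have e1 : ∀ n : ℕ, ‖(Real.pi : ℂ) * (y * Complex.I) *
      ∏ j ∈ Finset.range n, (1 - (y * Complex.I) ^ 2 / ((j : ℂ) + 1) ^ 2)‖ =
      Real.pi * y * ∏ j ∈ Finset.range n, (1 + (y / ((j : ℝ) + 1)) ^ 2) := by
    intro n
    have : ∏ j ∈ Finset.range n, (1 - (y * Complex.I) ^ 2 / ((j : ℂ) + 1) ^ 2) =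
        ((∏ j ∈ Finset.range n, (1 + (y / ((j : ℝ) + 1)) ^ 2) : ℝ) : ℂ) := by
      push_cast
      refine Finset.prod_congr rfl fun j _ => ?_
      rw [mul_pow, Complex.I_sq, div_pow]
      ring
    rw [this, norm_mul, norm_mul, norm_mul, Complex.norm_real, Complex.norm_real,
      Complex.norm_real, Complex.norm_I, Real.norm_of_nonneg (by positivity),
      Real.norm_of_nonneg (by positivity),
      Real.norm_of_nonneg (Finset.prod_nonneg fun i _ => by positivity)]
    ring
  have e2 : ‖Complex.sin ((Real.pi : ℂ) * (y * Complex.I))‖ ≤ Real.exp (Real.pi * y) := by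
    rw [← mul_assoc, Complex.sin_mul_I, norm_mul, Complex.norm_I, mul_one, ← Complex.ofReal_mul,
      ← Complex.ofReal_sinh, Complex.norm_real,
      Real.norm_of_nonneg (Real.sinh_nonneg_iff.2 (by positivity)), Real.sinh_eq]
    linarith [Real.exp_pos (Real.pi * y), Real.exp_pos (-(Real.pi * y))]
  simp_rw [e1] at h
  have hmono := (prod_one_add_sq_mono y).const_mul (show (0 : ℝ) ≤ Real.pi * y by positivity)
  have h1 := hmono.ge_of_tendsto h n
  have h0 : 0 ≤ ∏ j ∈ Finset.range n, (1 + (y / ((j : ℝ) + 1)) ^ 2) :=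
    Finset.prod_nonneg fun i _ => by positivity
  calc _ ≤ Real.pi * y * ∏ j ∈ Finset.range n, (1 + (y / ((j : ℝ) + 1)) ^ 2) :=
        le_mul_of_one_le_left h0 (by nlinarith)
    _ ≤ _ := h1.trans e2

lemma prod_one_add_sq_le_exp {y : ℝ} (hy : 0 ≤ y) (n : ℕ) :
    ∏ j ∈ Finset.range n, (1 + (y / ((j : ℝ) + 1)) ^ 2) ≤ Real.exp (Real.pi * (y + 1)) := by
  refine le_trans ?_ (prod_one_add_sq_le_exp_of_one_le (y := y + 1) (by linarith) n)
  refine Finset.prod_le_prod (fun i _ => by positivity) fun i _ => ?_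
  gcongr
  linarith

/-- The points of `ℤ^d` counted by the information complexity, at level `s = ε⁻² - 1`. -/
def levelSet (a b : ℕ → ℝ) (d : ℕ) (s : ℝ) : Set (Fin d → ℤ) :=
  {k | ∑ j : Fin d, a j * |(k j : ℝ)| ^ (2 * b j) < s}

/-- A level set lies in a finite box, whose side lengths may depend on the coordinate. -/
lemma exists_box {a b : ℕ → ℝ} (ha : ∀ j, 0 < a j) (hb : ∀ j, 0 < b j) (d : ℕ) {s : ℝ}
    (hs : 0 < s) : ∃ T : Fin d → Finset ℤ, levelSet a b d s ⊆ ↑(Fintype.piFinset T) := by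
  refine ⟨fun j => Finset.Icc (-⌈(s / a j) ^ (2 * b j)⁻¹⌉) ⌈(s / a j) ^ (2 * b j)⁻¹⌉, ?_⟩
  intro k hk
  rw [Finset.mem_coe, Fintype.mem_piFinset]
  intro j
  have hj : a j * |(k j : ℝ)| ^ (2 * b j) < s := by
    refine lt_of_le_of_lt ?_ hk
    exact Finset.single_le_sum (f := fun j : Fin d => a j * |(k j : ℝ)| ^ (2 * b j))
      (fun i _ => mul_nonneg (ha i).le (by positivity)) (Finset.mem_univ j)
  have h1 : |(k j : ℝ)| ^ (2 * b j) < s / a j := by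
    rw [lt_div_iff₀ (ha j)]; linarith
  have h2 := (Real.lt_rpow_inv_iff_of_pos (abs_nonneg (k j : ℝ)) (div_pos hs (ha j)).le
    (by linarith [hb j] : 0 < 2 * b j)).2 h1
  have h3 : |k j| ≤ ⌈(s / a j) ^ (2 * b j)⁻¹⌉ := by
    have := h2.le.trans (Int.le_ceil _)
    exact_mod_cast this
  exact Finset.mem_Icc.2 (abs_le.1 h3)

lemma levelSet_finite {a b : ℕ → ℝ} (ha : ∀ j, 0 < a j) (hb : ∀ j, 0 < b j) (d : ℕ) {s : ℝ}
    (hs : 0 < s) : (levelSet a b d s).Finite := by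
  obtain ⟨T, hT⟩ := exists_box ha hb d hs
  exact (Finset.finite_toSet _).subset hT

lemma one_le_ncard {a b : ℕ → ℝ} (ha : ∀ j, 0 < a j) (hb : ∀ j, 0 < b j) (d : ℕ) {s : ℝ}
    (hs : 0 < s) : 1 ≤ (levelSet a b d s).ncard := by
  rw [Nat.one_le_iff_ne_zero, Ne, Set.ncard_eq_zero (levelSet_finite ha hb d hs)]
  refine Set.Nonempty.ne_empty ⟨0, ?_⟩
  have : ∑ j : Fin d, a j * |((0 : ℤ) : ℝ)| ^ (2 * b j) = 0 :=
    Finset.sum_eq_zero fun j _ => by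
      rw [Int.cast_zero, abs_zero, Real.zero_rpow (by linarith [hb j]), mul_zero]
  exact lt_of_eq_of_lt this hs

/-- A level set whose level exceeds `∑ a_j` contains all `0`-`1` vectors. -/
lemma two_pow_le_ncard {a b : ℕ → ℝ} (ha : ∀ j, 0 < a j) (hb : ∀ j, 0 < b j) (d : ℕ) {s : ℝ}
    (hs : ∑ j : Fin d, a j < s) (hs0 : 0 < s) : 2 ^ d ≤ (levelSet a b d s).ncard := by
  have hsub : (↑(Fintype.piFinset fun _ : Fin d => ({0, 1} : Finset ℤ)) : Set (Fin d → ℤ)) ⊆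
      levelSet a b d s := by
    intro k hk
    rw [Finset.mem_coe, Fintype.mem_piFinset] at hk
    refine lt_of_le_of_lt (Finset.sum_le_sum fun j _ => ?_) hs
    have := hk j
    rw [Finset.mem_insert, Finset.mem_singleton] at this
    rcases this with h | h
    · rw [h, Int.cast_zero, abs_zero, Real.zero_rpow (by linarith [hb j]), mul_zero]
      exact (ha j).le
    · simp [h]
  have := Set.ncard_le_ncard hsub (levelSet_finite ha hb d hs0)
  rwa [Set.ncard_coe_finset, Fintype.card_piFinset_const] at this

/-- Bound for finite partial sums of `∑_{k ∈ ℤ} e^{-u |k|^{2β}}`, uniform in `β ≥ B`. -/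
lemma exists_sum_exp_le {B : ℝ} (hB : 0 < B) : ∃ Q : ℝ, 0 < Q ∧ ∃ m : ℕ, 0 < m ∧
    ∀ β : ℝ, B ≤ β → ∀ u : ℝ, 0 < u → ∀ T : Finset ℤ,
      ∑ k ∈ T, Real.exp (-(u * |(k : ℝ)| ^ (2 * β))) ≤ (1 + (Q / u) ^ 2) ^ m := by
  obtain ⟨m, hm⟩ := exists_nat_gt (1 / B)
  have hm0 : 0 < m := by
    have : (0 : ℝ) < m := lt_trans (by positivity) hm
    exact_mod_cast this
  have hBm : 1 ≤ B * m := by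
    rw [div_lt_iff₀ hB] at hm; linarith
  have hsum : Summable fun k : ℤ => 1 / (k : ℝ) ^ 2 := Real.summable_one_div_int_pow.2 one_lt_two
  set Z : ℝ := ∑' k : ℤ, 1 / (k : ℝ) ^ 2 with hZ
  have hZ0 : 0 ≤ Z := tsum_nonneg fun k => by positivity
  set A : ℝ := ((2 * m).factorial : ℝ) * Z with hA
  have hA0 : 0 ≤ A := by positivity
  refine ⟨1 + A, by linarith, m, hm0, fun β hβ u hu T => ?_⟩
  have hterm : ∀ k : ℤ, Real.exp (-(u * |(k : ℝ)| ^ (2 * β))) ≤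
      (if k = 0 then 1 else 0) + ((2 * m).factorial : ℝ) / u ^ (2 * m) * (1 / (k : ℝ) ^ 2) := by
    intro k
    by_cases hk : k = 0
    · subst hk
      have : 2 * β ≠ 0 := by linarith
      simp [Real.zero_rpow this]
    · rw [if_neg hk, zero_add]
      have hk1 : (1 : ℝ) ≤ |(k : ℝ)| := by exact_mod_cast Int.one_le_abs hk
      have hv : 0 < u * |(k : ℝ)| ^ (2 * β) := by positivity
      have h1 := Real.pow_div_factorial_le_exp _ hv.le (2 * m)
      have h2 : (k : ℝ) ^ 2 ≤ (|(k : ℝ)| ^ (2 * β)) ^ (2 * m) := by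
        rw [← sq_abs, ← Real.rpow_natCast, ← Real.rpow_natCast, ← Real.rpow_mul (abs_nonneg _)]
        refine Real.rpow_le_rpow_of_exponent_le hk1 ?_
        push_cast
        have : B * m ≤ β * m := by gcongr
        nlinarith
      have hk2 : (0 : ℝ) < (k : ℝ) ^ 2 := by positivity
      have hf : (0 : ℝ) < ((2 * m).factorial : ℝ) := by positivity
      have hu' : 0 < u ^ (2 * m) := by positivity
      rw [Real.exp_neg, div_mul_div_comm, mul_one, inv_eq_one_div,
        div_le_div_iff₀ (Real.exp_pos _) (by positivity), one_mul]
      rw [div_le_iff₀ hf, mul_pow] at h1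
      calc u ^ (2 * m) * (k : ℝ) ^ 2 ≤ u ^ (2 * m) * (|(k : ℝ)| ^ (2 * β)) ^ (2 * m) := by gcongr
        _ ≤ _ := by linarith
  have h1 : ∑ k ∈ T, (if k = 0 then (1 : ℝ) else 0) ≤ 1 := by
    rw [Finset.sum_ite_eq']; split_ifs <;> norm_num
  have h2 : ∑ k ∈ T, 1 / (k : ℝ) ^ 2 ≤ Z := hsum.sum_le_tsum T fun k _ => by positivity
  have hA1 : A ≤ (1 + A) ^ (2 * m) :=
    le_trans (by linarith) (le_self_pow₀ (by linarith) (by omega))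
  calc ∑ k ∈ T, Real.exp (-(u * |(k : ℝ)| ^ (2 * β)))
      ≤ ∑ k ∈ T, ((if k = 0 then (1 : ℝ) else 0) +
          ((2 * m).factorial : ℝ) / u ^ (2 * m) * (1 / (k : ℝ) ^ 2)) :=
        Finset.sum_le_sum fun k _ => hterm k
    _ ≤ 1 + ((2 * m).factorial : ℝ) / u ^ (2 * m) * Z := by
        rw [Finset.sum_add_distrib, ← Finset.mul_sum]; gcongr
    _ = 1 + A / u ^ (2 * m) := by rw [hA]; ring
    _ ≤ 1 + (1 + A) ^ (2 * m) / u ^ (2 * m) := by gcongr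
    _ = 1 ^ m + (((1 + A) / u) ^ 2) ^ m := by rw [← pow_mul, div_pow, one_pow]
    _ ≤ _ := pow_add_pow_le zero_le_one (by positivity) hm0.ne'

/-- Exponential-moment (Chernoff) bound for the cardinality of a level set. -/
lemma ncard_le_exp_mul_prod {a b : ℕ → ℝ} (ha : ∀ j, 0 < a j) (hb : ∀ j, 0 < b j) {B Q : ℝ}
    (hB : ∀ j, B ≤ b j) {m : ℕ}
    (hQ : ∀ β : ℝ, B ≤ β → ∀ u : ℝ, 0 < u → ∀ T : Finset ℤ,
      ∑ k ∈ T, Real.exp (-(u * |(k : ℝ)| ^ (2 * β))) ≤ (1 + (Q / u) ^ 2) ^ m)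
    (d : ℕ) {s t : ℝ} (hs : 0 < s) (ht : 0 < t) :
    ((levelSet a b d s).ncard : ℝ) ≤
      Real.exp (t * s) * ∏ j ∈ Finset.range d, (1 + (Q / (t * a j)) ^ 2) ^ m := by
  classical
  obtain ⟨T, hT⟩ := exists_box ha hb d hs
  have hfin := levelSet_finite ha hb d hs
  have hsubT : hfin.toFinset ⊆ Fintype.piFinset T := fun k hk =>
    hT (hfin.mem_toFinset.1 hk)
  rw [Set.ncard_eq_toFinset_card _ hfin, Finset.cast_card]
  calc ∑ k ∈ hfin.toFinset, (1 : ℝ)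
      ≤ ∑ k ∈ hfin.toFinset, Real.exp (t * s) *
          ∏ j : Fin d, Real.exp (-(t * a j * |(k j : ℝ)| ^ (2 * b j))) := by
        refine Finset.sum_le_sum fun k hk => ?_
        have hk' : ∑ j : Fin d, a j * |(k j : ℝ)| ^ (2 * b j) < s := hfin.mem_toFinset.1 hk
        rw [← Real.exp_sum, ← Real.exp_add, Finset.sum_neg_distrib]
        refine Real.one_le_exp ?_
        simp_rw [mul_assoc, ← Finset.mul_sum]
        nlinarith
    _ ≤ ∑ k ∈ Fintype.piFinset T, Real.exp (t * s) *
          ∏ j : Fin d, Real.exp (-(t * a j * |(k j : ℝ)| ^ (2 * b j))) :=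
        Finset.sum_le_sum_of_subset_of_nonneg hsubT fun k _ _ => by positivity
    _ = Real.exp (t * s) *
          ∏ j : Fin d, ∑ k ∈ T j, Real.exp (-(t * a j * |(k : ℝ)| ^ (2 * b j))) := by
        rw [← Finset.mul_sum, Finset.prod_univ_sum]
    _ ≤ Real.exp (t * s) * ∏ j : Fin d, (1 + (Q / (t * a j)) ^ 2) ^ m := by
        gcongr with j _
        exact hQ _ (hB j) _ (mul_pos ht (ha j)) _
    _ = _ := by rw [Fin.prod_univ_eq_prod_range (fun j => (1 + (Q / (t * a j)) ^ 2) ^ m)]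

lemma exists_log_le (N : ℕ) {c η : ℝ} (hc : 0 ≤ c) (hη : 0 < η) : ∃ C : ℝ, ∀ x : ℝ, 0 ≤ x →
    N * Real.log (1 + (c * x) ^ 2) ≤ η * x + C := by
  -- `r` is chosen so that the slope `2 N r c` of the linear bound stays below `η`.
  set r : ℝ := η / (2 * (N + 1) * (c + 1)) with hr
  have hr0 : 0 < r := by positivity
  refine ⟨N * (2 * (r - Real.log r)), fun x hx => ?_⟩
  have hcx : 0 ≤ c * x := by positivity
  have h1 : Real.log (1 + (c * x) ^ 2) ≤ 2 * Real.log (1 + c * x) := by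
    have := Real.log_le_log (by positivity)
      (show 1 + (c * x) ^ 2 ≤ (1 + c * x) ^ 2 by nlinarith)
    rwa [Real.log_pow, Nat.cast_ofNat] at this
  have h2 : Real.log r + Real.log (1 + c * x) ≤ r * (1 + c * x) := by
    rw [← Real.log_mul hr0.ne' (by positivity)]
    linarith [Real.log_le_sub_one_of_pos (show 0 < r * (1 + c * x) by positivity)]
  have h3 : (N : ℝ) * (2 * (r * c)) ≤ η := by
    have : r * (2 * (N + 1) * (c + 1)) = η := by rw [hr]; field_simp
    nlinarith [mul_nonneg hr0.le hc, mul_nonneg hr0.le (Nat.cast_nonneg (α := ℝ) N)]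
  calc N * Real.log (1 + (c * x) ^ 2) ≤ N * (2 * (r * (1 + c * x) - Real.log r)) := by
        gcongr; linarith
    _ = (N * (2 * (r * c))) * x + N * (2 * (r - Real.log r)) := by ring
    _ ≤ _ := by gcongr

/-- If `a_j / j → ∞`, then `ln n(1/x, I_d) ≤ η x + C` with `C` independent of `x` and `d`. -/
lemma log_ncard_le {a b : ℕ → ℝ} (ha : ∀ j, 0 < a j) (hb : ∀ j, 0 < b j)
    (hamono : Monotone a) (hbinf : 0 < ⨅ j, b j)
    (hlim : Tendsto (fun j : ℕ => a j / (j : ℝ)) atTop atTop) {η : ℝ} (hη : 0 < η) :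
    ∃ C : ℝ, ∀ d : ℕ, ∀ x : ℝ, 1 < x →
      Real.log ((levelSet a b d (x ^ 2 - 1)).ncard) ≤ η * x + C := by
  have hB : ∀ j, (⨅ j, b j) ≤ b j := fun j =>
    ciInf_le ⟨0, by rintro _ ⟨i, rfl⟩; exact (hb i).le⟩ j
  obtain ⟨Q, hQ0, m, hm, hQ⟩ := exists_sum_exp_le hbinf
  have hpi := Real.pi_pos
  have hm' : (0 : ℝ) < m := by exact_mod_cast hm
  -- One third of `η` is spent on each of the exponential factor, the first `J` coordinates and
  -- the sine product; `K` makes the exponent `m π Q x / (θ K)` of the latter equal to `θ x`.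
  set θ : ℝ := η / 3 with hθ
  have hθ0 : 0 < θ := by positivity
  set K : ℝ := m * Real.pi * Q / (θ * θ) with hK
  have hK0 : 0 < K := by positivity
  obtain ⟨J, hJ⟩ : ∃ J : ℕ, ∀ j, J ≤ j → K * (j + 1) ≤ a j := by
    obtain ⟨J, hJ⟩ := eventually_atTop.1 (hlim.eventually_ge_atTop (2 * K))
    refine ⟨J + 1, fun j hj => ?_⟩
    have h1 : (1 : ℝ) ≤ j := by exact_mod_cast (by omega : 1 ≤ j)
    have h2 := hJ j (by omega)
    rw [le_div_iff₀ (by linarith)] at h2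
    nlinarith
  obtain ⟨C, hC⟩ := exists_log_le (m * J) (c := Q / (θ * a 0)) (by have := ha 0; positivity) hθ0
  refine ⟨C + m * Real.pi, fun d x hx => ?_⟩
  have hx0 : 0 < x := by linarith
  have hs : 0 < x ^ 2 - 1 := by nlinarith
  have ht : 0 < θ / x := by positivity
  have hn := ncard_le_exp_mul_prod ha hb hB hQ d hs ht
  set P : ℝ := 1 + (Q / (θ * a 0) * x) ^ 2 with hP
  have hP1 : 1 ≤ P := by rw [hP]; linarith [sq_nonneg (Q / (θ * a 0) * x)]
  set y : ℝ := Q * x / (θ * K) with hy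
  have hy0 : 0 ≤ y := by positivity
  have hfac : ∀ j, 1 + (Q / (θ / x * a j)) ^ 2 ≤
      (if j < J then P else 1) * (1 + (y / ((j : ℝ) + 1)) ^ 2) := by
    intro j
    have haj := ha j
    have ha0 := ha 0
    split_ifs with h
    · refine le_trans ?_ (le_mul_of_one_le_right (zero_le_one.trans hP1)
        (by linarith [sq_nonneg (y / ((j : ℝ) + 1))]))
      have : Q / (θ / x * a j) ≤ Q / (θ * a 0) * x := by
        rw [show Q / (θ / x * a j) = Q / (θ * a j) * x by field_simp]
        gcongr
        exact hamono (Nat.zero_le j)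
      rw [hP]
      gcongr
    · have h1 := hJ j (not_lt.1 h)
      have : Q / (θ / x * a j) ≤ y / ((j : ℝ) + 1) := by
        rw [show Q / (θ / x * a j) = Q * x / (θ * a j) by field_simp, hy, div_div, mul_assoc θ]
        gcongr
      rw [one_mul]
      gcongr
  have hprodP : ∏ j ∈ Finset.range d, (if j < J then P else 1) ≤ P ^ J := by
    rw [Finset.prod_ite, Finset.prod_const, Finset.prod_const_one, mul_one]
    refine pow_le_pow_right₀ hP1 ?_
    calc _ ≤ (Finset.range J).card := Finset.card_le_card fun j hj => by
          simpa using (Finset.mem_filter.1 hj).2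
      _ = J := Finset.card_range J
  have hprod : ∏ j ∈ Finset.range d, (1 + (Q / (θ / x * a j)) ^ 2) ^ m ≤
      (P ^ J * Real.exp (Real.pi * (y + 1))) ^ m := by
    rw [Finset.prod_pow]
    refine pow_le_pow_left₀ (Finset.prod_nonneg fun j _ => by positivity) ?_ m
    refine (Finset.prod_le_prod (fun j _ => by positivity) fun j _ => hfac j).trans ?_
    rw [Finset.prod_mul_distrib]
    exact mul_le_mul hprodP (prod_one_add_sq_le_exp hy0 d)
      (Finset.prod_nonneg fun j _ => by positivity) (by positivity)
  have hn1 : (0 : ℝ) < (levelSet a b d (x ^ 2 - 1)).ncard := by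
    exact_mod_cast one_le_ncard ha hb d hs
  have hfin := Real.log_le_log hn1 (hn.trans (mul_le_mul_of_nonneg_left hprod (Real.exp_pos _).le))
  have hPp : 0 < P := by linarith
  rw [Real.log_mul (by positivity) (by positivity), Real.log_exp, Real.log_pow,
    Real.log_mul (by positivity) (by positivity), Real.log_exp, Real.log_pow] at hfin
  have h1 : θ / x * (x ^ 2 - 1) ≤ θ * x := by
    rw [div_mul_eq_mul_div, div_le_iff₀ hx0]; nlinarith
  have h2 : m * (Real.pi * y) = θ * x := by
    rw [hy, hK]; field_simp
  have h3 := hC x hx0.le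
  rw [← hP] at h3
  push_cast at h3
  have h4 : η * x = θ * x + θ * x + θ * x := by rw [hθ]; ring
  nlinarith

/-- For the weighted anisotropic Sobolev embeddings with information complexity
`n(ε, I_d) = #{k ∈ ℤ^d : ∑_{j=1}^d a_j |k_j|^{2b_j} < ε^{-2} - 1}`:
weak tractability holds iff `lim a_j/j = ∞`. -/
theorem WT_iff_cond
    (a b : ℕ → ℝ) (ha : ∀ j, 0 < a j) (hb : ∀ j, 0 < b j)
    (hamono : Monotone a) (hbinf : 0 < ⨅ j, b j) :
    (∀ δ : ℝ, 0 < δ → ∃ M : ℝ, 0 < M ∧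
        ∀ d : ℕ, 0 < d → ∀ ε : ℝ, ε ∈ Set.Ioo (0 : ℝ) 1 → M ≤ ε⁻¹ + d →
          |Real.log (({k : Fin d → ℤ |
              ∑ j : Fin d, a j * |(k j : ℝ)| ^ (2 * b j) < ε⁻¹ ^ 2 - 1}).ncard) /
            (ε⁻¹ + (d : ℝ))| ≤ δ) ↔
      Tendsto (fun j : ℕ => a j / (j : ℝ)) atTop atTop := by
  constructor
  · intro hWT
    by_contra hnot
    rw [tendsto_atTop] at hnot
    push Not at hnot
    obtain ⟨C₀, hC₀⟩ := hnot
    set C : ℝ := max C₀ 1 with hC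
    have hC1 : 1 ≤ C := le_max_right _ _
    have hlog2 : 0 < Real.log 2 := Real.log_pos one_lt_two
    -- With `x = C d + 1` the ratio is at least `d ln 2 / (C d + 1 + d) ≥ ln 2 / (C + 2)`.
    obtain ⟨M, hM, h⟩ := hWT (Real.log 2 / (2 * (C + 2))) (by positivity)
    obtain ⟨d, hd, hCd⟩ := (frequently_atTop.1 hC₀) (⌈M⌉₊ + 1)
    have hd0 : 0 < d := by omega
    have hd1 : (1 : ℝ) ≤ d := by exact_mod_cast hd0
    have hMd : M ≤ d := (Nat.le_ceil M).trans (by exact_mod_cast (by omega : ⌈M⌉₊ ≤ d))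
    have had : a d ≤ C * d := by
      rw [div_lt_iff₀ (by linarith)] at hCd
      exact hCd.le.trans (by gcongr; exact le_max_left _ _)
    have hx1 : 1 < C * d + 1 := by nlinarith
    have hCd0 : 0 < C * d := by positivity
    have h1 := h d hd0 (C * d + 1)⁻¹ ⟨by positivity, inv_lt_one_of_one_lt₀ hx1⟩
      (by rw [inv_inv]; linarith)
    rw [inv_inv] at h1
    have hsum : ∑ j : Fin d, a j < (C * d + 1) ^ 2 - 1 := by
      have : ∑ j : Fin d, a j ≤ ∑ _j : Fin d, C * d :=
        Finset.sum_le_sum fun j _ => (hamono j.2.le).trans had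
      rw [Finset.sum_const, Finset.card_univ, Fintype.card_fin, nsmul_eq_mul] at this
      nlinarith
    have hcard := two_pow_le_ncard ha hb d hsum (by nlinarith)
    have hcard' : (2 : ℝ) ^ d ≤ ((levelSet a b d ((C * d + 1) ^ 2 - 1)).ncard : ℝ) := by
      exact_mod_cast hcard
    have hlog := Real.log_le_log (by positivity) hcard'
    rw [Real.log_pow] at hlog
    have h2 := (le_abs_self _).trans h1
    rw [div_le_iff₀ (by positivity)] at h2
    have h3 : d * Real.log 2 ≤ Real.log 2 / (2 * (C + 2)) * (C * d + 1 + d) := hlog.trans h2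
    rw [div_mul_eq_mul_div, le_div_iff₀ (by positivity)] at h3
    have h4 : d * (2 * (C + 2)) ≤ C * d + 1 + d := by
      refine le_of_mul_le_mul_left ?_ hlog2
      linarith
    nlinarith
  · intro hlim δ hδ
    obtain ⟨C, hC⟩ := log_ncard_le ha hb hamono hbinf hlim (half_pos hδ)
    refine ⟨max 1 (2 * C / δ), by positivity, fun d hd ε hε hMd => ?_⟩
    have hx : 1 < ε⁻¹ := (one_lt_inv₀ hε.1).2 hε.2
    have h1 := hC d ε⁻¹ hx
    have hn := one_le_ncard ha hb d (s := ε⁻¹ ^ 2 - 1) (by nlinarith)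
    have h0 : 0 ≤ Real.log ((levelSet a b d (ε⁻¹ ^ 2 - 1)).ncard) :=
      Real.log_natCast_nonneg _
    have hxd : 0 < ε⁻¹ + (d : ℝ) := by positivity
    change |Real.log ((levelSet a b d (ε⁻¹ ^ 2 - 1)).ncard) / (ε⁻¹ + (d : ℝ))| ≤ δ
    rw [abs_of_nonneg (by positivity), div_le_iff₀ hxd]
    have h2 := (le_max_right _ _).trans hMd
    rw [div_le_iff₀ hδ] at h2
    have h3 : 0 ≤ δ * (d : ℝ) := by positivity
    nlinarith
end

section
/- Let a = {a_j}_{j≥1} and b = {b_j}_{j≥1} be sequences of positive real numbers with a_1 ≤ a_2 ≤ ⋯ and inf_{j≥1} b_j > 0, let 0 < t < 1, and for d ∈ ℕ, ε ∈ (0,1) let n(ε, I_d) = #{k ∈ ℤ^d : Σ_{j=1}^d a_j |k_j|^{2b_j} < ε^{-2} - 1}. Then (2,t)-weak tractability holds (i.e., lim_{ε^{-1}+d→∞} (ln n(ε, I_d))/((ε^{-1})² + d^t) = 0) if and only if lim_{j→∞} a_j/(ln j) = ∞. -/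
open Filter

/-!
Write `R = ε⁻² - 1` and let `n` be the number of lattice points `k` with
`∑ a_j |k_j|^{2 b_j} < R`.

If `a_j / log j → ∞`, an exponential Chebyshev (Chernoff) bound with parameter `s > 0` gives
`n ≤ e^{sR} ∏_j ∑_{k ∈ ℤ} e^{-s a_j |k|^{2 b_j}}`. Since `b_j ≥ β := inf b > 0` and `a_j ≥ a_0 > 0`,
the `j`-th factor is at most `1 + K e^{-s a_j / 2}` with
`K = ∑_{k ∈ ℤ} e^{-(s a_0 / 2) |k|^{2β}}`. The terms `e^{-s a_j / 2}` are eventually at most `j⁻²`,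
hence summable, so `log n ≤ s ε⁻² + C_s` uniformly in `d` (`exists_log_ncard_le`). As `s` is
arbitrary and `ε⁻² + d^t → ∞`, tractability follows.

Conversely, take `m = ⌈d^t⌉` and `ε⁻² = 2 + m a_d`. Every `0/1` vector with exactly `m` ones is
counted, so `n ≥ d.choose m ≥ ((d + 1 - m) / m)^m` and `log n ≥ m ((1 - t) log d - 2 log 2)`
(`choose_le_ncard`, `le_log_choose`). Tractability gives `log n ≤ δ m (a_d + 3)` for large `d`;
dividing by `m` and letting `δ → 0` yields `a_d / log d → ∞`.
-/

/-! ### Finiteness of the set of lattice points -/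

lemma finite_coord (A p R : ℝ) (hA : 0 < A) (hp : 0 < p) :
    {k : ℤ | A * |(k : ℝ)| ^ p < R}.Finite := by
  have hs : Tendsto (fun x : ℝ => A * x ^ p) atTop atTop :=
    (tendsto_rpow_atTop hp).const_mul_atTop hA
  obtain ⟨N, hN⟩ := eventually_atTop.1 (hs.eventually_ge_atTop R)
  refine (Set.finite_Icc (-⌈N⌉) ⌈N⌉).subset fun k hk => ?_
  have h1 : |(k : ℝ)| < N := by
    by_contra! h
    exact absurd (hN _ h) (not_le.2 hk)
  have h2 : ((|k| : ℤ) : ℝ) ≤ (⌈N⌉ : ℤ) := by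
    rw [Int.cast_abs]; exact h1.le.trans (Int.le_ceil N)
  exact abs_le.1 (by exact_mod_cast h2)

lemma coord_lt (a b : ℕ → ℝ) (ha : ∀ j, 0 < a j) (d : ℕ) (R : ℝ) (k : Fin d → ℤ)
    (hk : ∑ j : Fin d, a j * |(k j : ℝ)| ^ (2 * b j) < R) (j : Fin d) :
    a j * |(k j : ℝ)| ^ (2 * b j) < R :=
  (Finset.single_le_sum (f := fun j : Fin d => a j * |(k j : ℝ)| ^ (2 * b j))
    (fun i _ => mul_nonneg (ha i).le (by positivity)) (Finset.mem_univ j)).trans_lt hk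

lemma finite_points (a b : ℕ → ℝ) (ha : ∀ j, 0 < a j) (hb : ∀ j, 0 < b j) (d : ℕ) (R : ℝ) :
    {k : Fin d → ℤ | ∑ j : Fin d, a j * |(k j : ℝ)| ^ (2 * b j) < R}.Finite := by
  refine (Set.Finite.pi' (t := fun j : Fin d => {k : ℤ | a j * |(k : ℝ)| ^ (2 * b j) < R})
    fun j => finite_coord _ _ _ (ha j) (by linarith [hb j])).subset fun k hk j => ?_
  exact coord_lt a b ha d R k hk j

/-! ### Upper bound for the information complexity -/

lemma summable_exp_nat (c p : ℝ) (hc : 0 < c) (hp : 0 < p) :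
    Summable (fun n : ℕ => Real.exp (-c * (n : ℝ) ^ p)) := by
  have h1 := (isLittleO_exp_neg_mul_rpow_atTop hc (-2 / p)).isBigO.comp_tendsto
    ((tendsto_rpow_atTop hp).comp tendsto_natCast_atTop_atTop)
  have h2 : Summable (fun n : ℕ => (n : ℝ) ^ (-2 : ℝ)) := Real.summable_nat_rpow.2 (by norm_num)
  refine summable_of_isBigO_nat h2 (h1.congr (fun n => rfl) fun n => ?_)
  simp only [Function.comp]
  rw [← Real.rpow_mul (by positivity)]
  congr 1
  field_simp

lemma summable_exp_int (c p : ℝ) (hc : 0 < c) (hp : 0 < p) :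
    Summable (fun k : ℤ => Real.exp (-c * |(k : ℝ)| ^ p)) := by
  apply Summable.of_nat_of_neg
  · simpa using summable_exp_nat c p hc hp
  · simpa using summable_exp_nat c p hc hp

/-- Bound for one factor of the Chernoff product: for `k ≠ 0`, `|k|^{2b} ≥ |k|^{2β} ≥ 1`, so half of
the exponent `s A |k|^{2b}` dominates `s A / 2` and the other half `(s a₀ / 2) |k|^{2β}`. -/
lemma factor_le (s A a₀ β b : ℝ) (hs : 0 < s) (ha₀ : 0 < a₀) (hA : a₀ ≤ A) (hβ : 0 < β)
    (hb : β ≤ b) (T : Finset ℤ) :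
    ∑ k ∈ T, Real.exp (-s * (A * |(k : ℝ)| ^ (2 * b))) ≤
      1 + Real.exp (-(s / 2) * A) * ∑' k : ℤ, Real.exp (-(s / 2 * a₀) * |(k : ℝ)| ^ (2 * β)) := by
  have hsum := summable_exp_int (s / 2 * a₀) (2 * β) (by positivity) (by positivity)
  calc _ ≤ ∑ k ∈ T, ((if k = 0 then 1 else 0) +
        Real.exp (-(s / 2) * A) * Real.exp (-(s / 2 * a₀) * |(k : ℝ)| ^ (2 * β))) := by
        refine Finset.sum_le_sum fun k _ => ?_
        split_ifs with hk
        · subst hk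
          have h1 : Real.exp (-s * (A * |((0 : ℤ) : ℝ)| ^ (2 * b))) ≤ 1 := by
            rw [Real.exp_le_one_iff]
            have : 0 ≤ s * (A * |((0 : ℤ) : ℝ)| ^ (2 * b)) := by
              have := ha₀.trans_le hA
              positivity
            linarith
          exact h1.trans (le_add_of_nonneg_right (by positivity))
        · rw [zero_add, ← Real.exp_add, Real.exp_le_exp]
          have hk1 : (1 : ℝ) ≤ |(k : ℝ)| := by exact_mod_cast Int.one_le_abs hk
          have h1 : |(k : ℝ)| ^ (2 * β) ≤ |(k : ℝ)| ^ (2 * b) :=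
            Real.rpow_le_rpow_of_exponent_le hk1 (by linarith)
          have h2 : 1 ≤ |(k : ℝ)| ^ (2 * β) := Real.one_le_rpow hk1 (by linarith)
          have h3 : A ≤ A * |(k : ℝ)| ^ (2 * b) :=
            le_mul_of_one_le_right (by linarith) (h2.trans h1)
          have h4 : a₀ * |(k : ℝ)| ^ (2 * β) ≤ A * |(k : ℝ)| ^ (2 * b) :=
            mul_le_mul hA h1 (by linarith) (by linarith)
          have h5 := mul_le_mul_of_nonneg_left (add_le_add h3 h4) hs.le
          linarith
    _ ≤ _ := by
        rw [Finset.sum_add_distrib, ← Finset.mul_sum]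
        refine add_le_add ?_ (mul_le_mul_of_nonneg_left
          (hsum.sum_le_tsum _ fun _ _ => (Real.exp_pos _).le) (Real.exp_pos _).le)
        rw [Finset.sum_ite_eq']
        split_ifs <;> norm_num

/-- The Chernoff bound for the number of lattice points, with the infinite sums over `ℤ` replaced
by sums over finite sets containing all coordinates that occur. -/
lemma chernoff (a b : ℕ → ℝ) (ha : ∀ j, 0 < a j) (hb : ∀ j, 0 < b j) (d : ℕ) (R s : ℝ)
    (hs : 0 < s) : ∃ T : Fin d → Finset ℤ,
    (({k : Fin d → ℤ | ∑ j : Fin d, a j * |(k j : ℝ)| ^ (2 * b j) < R}.ncard : ℕ) : ℝ) ≤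
      Real.exp (s * R) *
        ∏ j : Fin d, ∑ k ∈ T j, Real.exp (-s * (a j * |(k : ℝ)| ^ (2 * b j))) := by
  have hfin := finite_points a b ha hb d R
  have hfc : ∀ j : Fin d, {k : ℤ | a j * |(k : ℝ)| ^ (2 * b j) < R}.Finite :=
    fun j => finite_coord _ _ _ (ha j) (by linarith [hb j])
  refine ⟨fun j => (hfc j).toFinset, ?_⟩
  rw [Set.ncard_eq_toFinset_card _ hfin, Finset.prod_univ_sum, Finset.mul_sum,
    Finset.cast_card]
  refine (Finset.sum_le_sum (g := fun k : Fin d → ℤ => Real.exp (s * R) *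
    ∏ j : Fin d, Real.exp (-s * (a j * |(k j : ℝ)| ^ (2 * b j)))) fun k hk => ?_).trans
    (Finset.sum_le_sum_of_subset_of_nonneg (fun k hk => ?_) fun k _ _ => by positivity)
  · rw [← Real.exp_sum, ← Real.exp_add, ← Finset.mul_sum]
    apply Real.one_le_exp
    have hk' : ∑ j : Fin d, a j * |(k j : ℝ)| ^ (2 * b j) < R := by simpa using hk
    nlinarith
  · have hk' : ∑ j : Fin d, a j * |(k j : ℝ)| ^ (2 * b j) < R := by simpa using hk
    rw [Fintype.mem_piFinset]
    intro j
    simpa using coord_lt a b ha d R k hk' j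

lemma summable_exp_weights (a : ℕ → ℝ) (c : ℝ) (hc : 0 < c)
    (h : Tendsto (fun j : ℕ => a j / Real.log j) atTop atTop) :
    Summable (fun j : ℕ => Real.exp (-c * a j)) := by
  refine Summable.of_norm_bounded_eventually_nat
    (g := fun n : ℕ => (n : ℝ) ^ (-2 : ℝ)) (Real.summable_nat_rpow.2 (by norm_num)) ?_
  filter_upwards [h.eventually_ge_atTop (2 / c), eventually_ge_atTop 2] with j hj hj2
  have hj0 : (1 : ℝ) < j := by exact_mod_cast hj2
  have hl := Real.log_pos hj0
  rw [Real.norm_eq_abs, abs_of_pos (Real.exp_pos _), Real.rpow_def_of_pos (by linarith),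
    Real.exp_le_exp]
  rw [le_div_iff₀ hl, div_mul_eq_mul_div, div_le_iff₀ hc] at hj
  linarith

/-- Under `a_j / log j → ∞`, the log-cardinality grows in `R` with arbitrarily small slope, up to a
constant independent of the dimension. -/
lemma exists_log_ncard_le (a b : ℕ → ℝ) (ha : ∀ j, 0 < a j) (hb : ∀ j, 0 < b j)
    (hamono : Monotone a) (hbinf : 0 < ⨅ j, b j)
    (h : Tendsto (fun j : ℕ => a j / Real.log j) atTop atTop) (s : ℝ) (hs : 0 < s) :
    ∃ C : ℝ, ∀ (d : ℕ) (R : ℝ), 0 ≤ R →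
      Real.log (({k : Fin d → ℤ | ∑ j : Fin d, a j * |(k j : ℝ)| ^ (2 * b j) < R}).ncard) ≤
        s * R + C := by
  have hβ : ∀ j, (⨅ j, b j) ≤ b j :=
    fun j => ciInf_le ⟨0, by rintro _ ⟨i, rfl⟩; exact (hb i).le⟩ j
  have hsum := summable_exp_weights a (s / 2) (by positivity) h
  set K : ℝ := ∑' k : ℤ, Real.exp (-(s / 2 * a 0) * |(k : ℝ)| ^ (2 * ⨅ j, b j)) with hK
  have hK0 : 0 ≤ K := tsum_nonneg fun _ => (Real.exp_pos _).le
  have hW0 : 0 ≤ ∑' j : ℕ, Real.exp (-(s / 2) * a j) := tsum_nonneg fun _ => (Real.exp_pos _).le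
  refine ⟨(∑' j : ℕ, Real.exp (-(s / 2) * a j)) * K, fun d R hR => ?_⟩
  obtain ⟨T, hT⟩ := chernoff a b ha hb d R s hs
  rcases Nat.eq_zero_or_pos
    ({k : Fin d → ℤ | ∑ j : Fin d, a j * |(k j : ℝ)| ^ (2 * b j) < R}).ncard with h0 | h0
  · rw [h0, Nat.cast_zero, Real.log_zero]; positivity
  rw [Real.log_le_iff_le_exp (by exact_mod_cast h0), Real.exp_add]
  refine hT.trans (mul_le_mul_of_nonneg_left ?_ (Real.exp_pos _).le)
  calc _ ≤ ∏ j : Fin d, Real.exp (Real.exp (-(s / 2) * a j) * K) := by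
        refine Finset.prod_le_prod (fun _ _ => by positivity) fun j _ => ?_
        refine (factor_le s (a j) (a 0) _ (b j) hs (ha 0) (hamono (Nat.zero_le _)) hbinf
          (hβ j) (T j)).trans ?_
        rw [add_comm]
        exact Real.add_one_le_exp _
    _ ≤ _ := by
        rw [← Real.exp_sum, Real.exp_le_exp, ← Finset.sum_mul]
        refine mul_le_mul_of_nonneg_right ?_ hK0
        rw [Fin.sum_univ_eq_sum_range (fun j => Real.exp (-(s / 2) * a j))]
        exact hsum.sum_le_tsum _ fun _ _ => (Real.exp_pos _).le

/-! ### Lower bound for the information complexity -/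

/-- All `0/1` vectors with exactly `m` ones are counted once `m A < R`, where `A` bounds the
weights. -/
lemma choose_le_ncard (a b : ℕ → ℝ) (ha : ∀ j, 0 < a j) (hb : ∀ j, 0 < b j) (d m : ℕ) (A R : ℝ)
    (hA : ∀ j < d, a j ≤ A) (hR : m * A < R) :
    d.choose m ≤
      ({k : Fin d → ℤ | ∑ j : Fin d, a j * |(k j : ℝ)| ^ (2 * b j) < R}).ncard := by
  have hcard : d.choose m =
      (↑(Finset.powersetCard m (Finset.univ : Finset (Fin d))) : Set (Finset (Fin d))).ncard := by
    rw [Set.ncard_coe_finset, Finset.card_powersetCard, Finset.card_univ, Fintype.card_fin]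
  rw [hcard]
  refine Set.ncard_le_ncard_of_injOn (fun S j => if j ∈ S then (1 : ℤ) else 0) (fun S hS => ?_)
    (fun S _ S' _ hSS => ?_) (finite_points a b ha hb d R)
  · have hS' : S.card = m := by simpa using hS
    refine lt_of_le_of_lt ?_ hR
    calc _ ≤ ∑ j : Fin d, (if j ∈ S then A else 0) := by
          refine Finset.sum_le_sum fun j _ => ?_
          have := hb j
          by_cases hj : j ∈ S
          · simp [hj, hA j j.2]
          · simp [hj, Real.zero_rpow (show 2 * b j ≠ 0 by positivity)]
      _ = m * A := by simp [hS']
  · ext j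
    have := congrFun hSS j
    by_cases h1 : j ∈ S <;> by_cases h2 : j ∈ S' <;> simp_all

lemma le_log_choose (d m : ℕ) (t : ℝ) (hd : 0 < d) (hm : 0 < m) (hmd : 2 * m ≤ d)
    (hmt : (m : ℝ) ≤ 2 * (d : ℝ) ^ t) :
    m * ((1 - t) * Real.log d - 2 * Real.log 2) ≤ Real.log (d.choose m) := by
  have hd' : (0 : ℝ) < d := by exact_mod_cast hd
  have hm' : (0 : ℝ) < m := by exact_mod_cast hm
  have hmd' : (2 : ℝ) * m ≤ d := by exact_mod_cast hmd
  have h1 : ((d + 1 - m : ℕ) : ℝ) ^ m ≤ (m : ℝ) ^ m * (d.choose m : ℝ) := by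
    have h := Nat.pow_sub_le_descFactorial d m
    rw [Nat.descFactorial_eq_factorial_mul_choose] at h
    exact_mod_cast h.trans (Nat.mul_le_mul_right _ (Nat.factorial_le_pow m))
  have hc : (0 : ℝ) < d.choose m := by exact_mod_cast Nat.choose_pos (by omega)
  have h2 : ((d : ℝ) / 2) ^ m ≤ (m : ℝ) ^ m * (d.choose m : ℝ) := by
    refine le_trans (pow_le_pow_left₀ (by positivity) ?_ m) h1
    rw [Nat.cast_sub (by omega)]
    push_cast
    linarith
  have h3 := Real.log_le_log (by positivity) h2
  rw [Real.log_pow, Real.log_mul (by positivity) hc.ne', Real.log_pow,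
    Real.log_div hd'.ne' two_ne_zero] at h3
  have h4 : Real.log m ≤ Real.log 2 + t * Real.log d := by
    refine (Real.log_le_log hm' hmt).trans_eq ?_
    rw [Real.log_mul two_ne_zero (by positivity), Real.log_rpow hd']
  have h5 := mul_le_mul_of_nonneg_left h4 hm'.le
  linarith

/-- For `0 < t < 1`, rounding `d^t` up keeps it within a factor `2` and below `d / 2`. -/
lemma eventually_ceil (t : ℝ) (ht0 : 0 < t) (ht1 : t < 1) :
    ∀ᶠ d : ℕ in atTop, 2 * ⌈(d : ℝ) ^ t⌉₊ ≤ d ∧ ((⌈(d : ℝ) ^ t⌉₊ : ℕ) : ℝ) ≤ 2 * (d : ℝ) ^ t := by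
  have h := ((tendsto_rpow_atTop (show 0 < 1 - t by linarith)).comp
    tendsto_natCast_atTop_atTop).eventually_ge_atTop 4
  filter_upwards [h, eventually_ge_atTop 1] with d hd hd1
  have hd1' : (1 : ℝ) ≤ d := by exact_mod_cast hd1
  have h1 : 1 ≤ (d : ℝ) ^ t := Real.one_le_rpow hd1' ht0.le
  have h2 := Nat.ceil_lt_add_one (show 0 ≤ (d : ℝ) ^ t by positivity)
  have h3 : 4 * (d : ℝ) ^ t ≤ d := by
    have := mul_le_mul_of_nonneg_right hd (show 0 ≤ (d : ℝ) ^ t by positivity)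
    rwa [Function.comp_apply, ← Real.rpow_add (by linarith), sub_add_cancel, Real.rpow_one] at this
  refine ⟨?_, by linarith⟩
  have : (2 : ℝ) * (⌈(d : ℝ) ^ t⌉₊ : ℕ) ≤ d := by linarith
  exact_mod_cast this

/-! ### Tractability -/

/-- For the weighted anisotropic Sobolev embeddings with information complexity
`n(ε, I_d) = #{k ∈ ℤ^d : ∑_{j=1}^d a_j |k_j|^{2b_j} < ε^{-2} - 1}`:
for `0 < t < 1`, `(2,t)`-weak tractability holds iff `lim a_j/(ln j) = ∞`. -/
theorem two_t_WT_iff_cond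
    (a b : ℕ → ℝ) (ha : ∀ j, 0 < a j) (hb : ∀ j, 0 < b j)
    (hamono : Monotone a) (hbinf : 0 < ⨅ j, b j)
    (t : ℝ) (ht0 : 0 < t) (ht1 : t < 1) :
    (∀ δ : ℝ, 0 < δ → ∃ M : ℝ, 0 < M ∧
        ∀ d : ℕ, 0 < d → ∀ ε : ℝ, ε ∈ Set.Ioo (0 : ℝ) 1 → M ≤ ε⁻¹ + d →
          |Real.log (({k : Fin d → ℤ |
              ∑ j : Fin d, a j * |(k j : ℝ)| ^ (2 * b j) < ε⁻¹ ^ 2 - 1}).ncard) /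
            (ε⁻¹ ^ 2 + (d : ℝ) ^ t)| ≤ δ) ↔
      Tendsto (fun j : ℕ => a j / Real.log j) atTop atTop := by
  constructor
  · intro H
    rw [tendsto_atTop]
    intro C₀
    -- It suffices to reach the positive constant `C = max C₀ 1`.
    set C := max C₀ 1 with hC
    have hC1 : 1 ≤ C := le_max_right _ _
    -- With this `δ`, the final estimate reads `a d ≥ 2 C log d - O(1)`.
    obtain ⟨M, hM, H⟩ := H ((1 - t) / (2 * C)) (div_pos (by linarith) (by linarith))
    have hlog : Tendsto (fun d : ℕ => Real.log d) atTop atTop :=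
      Real.tendsto_log_atTop.comp tendsto_natCast_atTop_atTop
    filter_upwards [eventually_ceil t ht0 ht1, eventually_ge_atTop 2,
      tendsto_natCast_atTop_atTop.eventually_ge_atTop M,
      hlog.eventually_ge_atTop (4 * Real.log 2 / (1 - t) + 3)] with d hd hd2 hdM hdl
    obtain ⟨hmd, hmt⟩ := hd
    have hd1 : (1 : ℝ) < d := by exact_mod_cast hd2
    have hl := Real.log_pos hd1
    have hdt : 1 ≤ (d : ℝ) ^ t := Real.one_le_rpow hd1.le ht0.le
    set m := ⌈(d : ℝ) ^ t⌉₊ with hm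
    have hdm : (d : ℝ) ^ t ≤ m := Nat.le_ceil _
    have hm1 : (1 : ℝ) ≤ m := hdt.trans hdm
    have had := ha d
    have hmA : 0 < m * a d := by positivity
    set x := Real.sqrt (2 + m * a d) with hx
    have hx2 : x ^ 2 = 2 + m * a d := Real.sq_sqrt (by positivity)
    have hx1 : 1 < x := by rw [hx, Real.lt_sqrt (by norm_num)]; linarith
    have h1 := H d (by omega) x⁻¹ ⟨by positivity, inv_lt_one_of_one_lt₀ hx1⟩
      (by rw [inv_inv]; linarith)
    rw [inv_inv, hx2] at h1
    have h2 := (abs_le.1 h1).2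
    rw [div_le_iff₀ (by positivity)] at h2
    have h3 := choose_le_ncard a b ha hb d m (a d) (2 + m * a d - 1)
      (fun j hj => hamono hj.le) (by linarith)
    have h4 : Real.log (d.choose m) ≤ _ := Real.log_le_log
      (by exact_mod_cast Nat.choose_pos (by omega)) (Nat.cast_le.2 h3)
    have h5 := le_log_choose d m t (by omega) (by exact_mod_cast hm1) hmd hmt
    have hδ : 0 ≤ (1 - t) / (2 * C) := div_nonneg (by linarith) (by linarith)
    have h6 : (m : ℝ) * ((1 - t) * Real.log d - 2 * Real.log 2) ≤
        m * ((1 - t) / (2 * C) * (a d + 3)) :=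
      calc _ ≤ (1 - t) / (2 * C) * (2 + m * a d + (d : ℝ) ^ t) := h5.trans (h4.trans h2)
        _ ≤ (1 - t) / (2 * C) * (m * (a d + 3)) :=
            mul_le_mul_of_nonneg_left (by linarith) hδ
        _ = _ := by ring
    have h7 := le_of_mul_le_mul_left h6 (by linarith)
    refine (le_max_left C₀ 1).trans ?_
    rw [← hC, le_div_iff₀ hl]
    have ht : 0 < 1 - t := by linarith
    have h8 : 2 * C * (Real.log d - 2 * Real.log 2 / (1 - t)) ≤ a d + 3 := by
      have h9 : (1 - t) * Real.log d - 2 * Real.log 2 =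
        (1 - t) / (2 * C) * (2 * C * (Real.log d - 2 * Real.log 2 / (1 - t))) := by
        field_simp
      rw [h9] at h7
      exact le_of_mul_le_mul_left h7 (div_pos ht (by linarith))
    have h10 := mul_le_mul_of_nonneg_left hdl (show 0 ≤ C by linarith)
    have h11 : C * (4 * Real.log 2 / (1 - t) + 3) =
      2 * C * (2 * Real.log 2 / (1 - t)) + 3 * C := by ring
    linarith
  · intro h δ hδ
    obtain ⟨C, hC⟩ := exists_log_ncard_le a b ha hb hamono hbinf h (δ / 2) (by positivity)
    -- `D ≥ 2C/δ` is the size of `ε⁻² + d^t` that absorbs the additive constant `C`.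
    set D := max (2 * C / δ) 1 with hD
    have hD1 : 1 ≤ D := le_max_right _ _
    have hDC : C ≤ δ / 2 * D := by
      have := le_max_left (2 * C / δ) 1
      rw [← hD, div_le_iff₀ hδ] at this
      linarith
    have hDt : 0 < D ^ t⁻¹ := by positivity
    refine ⟨D + D ^ t⁻¹, by positivity, fun d hd ε hε hM => ?_⟩
    have hx1 : 1 < ε⁻¹ := (one_lt_inv₀ hε.1).2 hε.2
    have hx2 : ε⁻¹ ≤ ε⁻¹ ^ 2 := by nlinarith
    have hd0 : (0 : ℝ) < d := by exact_mod_cast hd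
    have hdt : 0 < (d : ℝ) ^ t := by positivity
    have hden : D ≤ ε⁻¹ ^ 2 + (d : ℝ) ^ t := by
      rcases le_total D ε⁻¹ with h1 | h1
      · linarith
      · have h2 : D ^ t⁻¹ ≤ d := by linarith
        have h3 := Real.rpow_le_rpow hDt.le h2 ht0.le
        rw [Real.rpow_inv_rpow (by linarith) ht0.ne'] at h3
        linarith
    have hpos : 0 < ε⁻¹ ^ 2 + (d : ℝ) ^ t := by linarith
    rw [abs_of_nonneg (div_nonneg (Real.log_natCast_nonneg _) hpos.le), div_le_iff₀ hpos]
    refine (hC d (ε⁻¹ ^ 2 - 1) (by linarith)).trans ?_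
    nlinarith
end
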